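/- arXiv:1404.6901 — 2 statements merged into one kernel-verified Lean document; each statement's English description precedes it below -/
import Mathlib

section
/- Consider the canonical observable system of dimension n. There exists a constant c > 0, depending only on n, such that: if z = (z₁, …, z_n) is absolutely continuous on [0,1], f = (f₁, …, f_n) is integrable on [0,1], ż_i = z_{i+1} + f_i for 1 ≤ i ≤ n−1 and ż_n = f_n almost everywhere, and y = z₁, then ∫₀¹ |z(t)| dt ≤ c ( ∫₀¹ |y(t)| dt + ∫₀¹ |f(t)| dt ). -/
open MeasureTheory

/-- Taylor-type polynomial with coefficients `a j / j!`. -/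
noncomputable def taylorP (n : ℕ) (a : ℕ → ℝ) (t : ℝ) : ℝ :=
  ∑ j ∈ Finset.range n, a j * (t ^ j / (j.factorial : ℝ))

lemma taylorP_continuous (n : ℕ) (a : ℕ → ℝ) : Continuous (taylorP n a) := by
  unfold taylorP; fun_prop

lemma taylorP_integral (n : ℕ) (a : ℕ → ℝ) (h : a n = 0) (hn : 0 < n) (t : ℝ) :
    taylorP n a t = a 0 + ∫ s in (0:ℝ)..t, taylorP n (fun j => a (j + 1)) s := by
  have h1 : ∫ s in (0:ℝ)..t, taylorP n (fun j => a (j + 1)) s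
      = ∑ j ∈ Finset.range n, a (j + 1) * (t ^ (j+1) / ((j+1).factorial : ℝ)) := by
    unfold taylorP
    rw [intervalIntegral.integral_finsetSum]
    · refine Finset.sum_congr rfl fun j _ => ?_
      rw [intervalIntegral.integral_const_mul, intervalIntegral.integral_div, integral_pow,
        Nat.factorial_succ]
      push_cast
      have : (j.factorial : ℝ) ≠ 0 := by positivity
      have : (j + 1 : ℝ) ≠ 0 := by positivity
      field_simp
      simp
    · intro j _
      apply Continuous.intervalIntegrable
      fun_prop
  have h2 := Finset.sum_range_succ (fun j => a j * (t ^ j / (j.factorial : ℝ))) n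
  have h3 := Finset.sum_range_succ' (fun j => a j * (t ^ j / (j.factorial : ℝ))) n
  rw [h1]
  unfold taylorP
  simp [h] at h2 h3
  rw [h2] at h3
  rw [h3]
  ring

/-- Extension of a vector by zero. -/
noncomputable def extz {n : ℕ} (v : Fin n → ℝ) (i : ℕ) : ℝ := if h : i < n then v ⟨i, h⟩ else 0

lemma taylorP_extz {n : ℕ} (v : Fin n → ℝ) (t : ℝ) :
    taylorP n (extz v) t = ∑ j : Fin n, v j * (t ^ (j:ℕ) / ((j:ℕ).factorial : ℝ)) := by
  unfold taylorP
  rw [Finset.sum_range]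
  refine Finset.sum_congr rfl fun j _ => ?_
  simp [extz]

lemma basis_bound (j : ℕ) (t : ℝ) (h0 : 0 ≤ t) (h1 : t ≤ 1) :
    |t ^ j / (j.factorial : ℝ)| ≤ 1 := by
  rw [abs_of_nonneg (by positivity)]
  have : (1:ℝ) ≤ j.factorial := by exact_mod_cast Nat.succ_le_of_lt (Nat.factorial_pos j)
  rw [div_le_one (by positivity)]
  exact (pow_le_one₀ h0 h1).trans this

lemma taylorP_abs_le (n : ℕ) (a : ℕ → ℝ) (A : ℝ) (ha : ∀ j, |a j| ≤ A) (t : ℝ)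
    (h0 : 0 ≤ t) (h1 : t ≤ 1) : |taylorP n a t| ≤ n * A := by
  unfold taylorP
  refine (Finset.abs_sum_le_sum_abs _ _).trans ?_
  calc _ ≤ ∑ j ∈ Finset.range n, A := by
        refine Finset.sum_le_sum fun j _ => ?_
        rw [abs_mul]
        calc _ ≤ |a j| * 1 := by gcongr; exact basis_bound j t h0 h1
          _ ≤ A := by simpa using ha j
    _ = _ := by simp

/-- Moment map. -/
noncomputable def momentMap (n : ℕ) : (Fin n → ℝ) →ₗ[ℝ] (Fin n → ℝ) where
  toFun v i := ∫ t in (0:ℝ)..1, taylorP n (extz v) t * (t ^ (i:ℕ) / ((i:ℕ).factorial : ℝ))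
  map_add' v w := by
    ext i
    simp only [Pi.add_apply]
    rw [← intervalIntegral.integral_add]
    · congr 1; ext t
      simp only [taylorP_extz, Pi.add_apply, add_mul, Finset.sum_add_distrib]
    · apply Continuous.intervalIntegrable
      have := taylorP_continuous n (extz v)
      fun_prop
    · apply Continuous.intervalIntegrable
      have := taylorP_continuous n (extz w)
      fun_prop
  map_smul' c v := by
    ext i
    simp only [Pi.smul_apply, smul_eq_mul, RingHom.id_apply]
    rw [← intervalIntegral.integral_const_mul]
    congr 1; ext t
    simp only [taylorP_extz, Pi.smul_apply, smul_eq_mul, mul_assoc, ← Finset.mul_sum]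

lemma momentMap_ker (n : ℕ) : LinearMap.ker (momentMap n) = ⊥ := by
  rw [LinearMap.ker_eq_bot']
  intro v hv
  have hc := taylorP_continuous n (extz v)
  have h0 : ∫ t in (0:ℝ)..1, taylorP n (extz v) t ^ 2 = 0 := by
    have : ∀ i, v i * momentMap n v i = 0 := by intro i; simp [hv]
    have hs : ∑ i, v i * momentMap n v i = 0 := by simp [this]
    refine Eq.trans ?_ hs
    simp only [momentMap, LinearMap.coe_mk, AddHom.coe_mk]
    simp_rw [← intervalIntegral.integral_const_mul]
    rw [← intervalIntegral.integral_finsetSum]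
    · congr 1; ext t
      rw [sq]
      nth_rw 2 [taylorP_extz]
      rw [Finset.mul_sum]
      refine Finset.sum_congr rfl fun j _ => by ring
    · intro i _
      apply Continuous.intervalIntegrable
      fun_prop
  have hz : ∀ t ∈ Set.Icc (0:ℝ) 1, taylorP n (extz v) t = 0 := by
    intro t ht
    by_contra hne
    have : 0 < ∫ t in (0:ℝ)..1, taylorP n (extz v) t ^ 2 := by
      apply intervalIntegral.integral_pos one_pos
      · fun_prop
      · intro x _; positivity
      · exact ⟨t, ht, by positivity⟩
    linarith
  let p : Polynomial ℝ := ∑ j : Fin n, Polynomial.monomial (j:ℕ) (v j / ((j:ℕ).factorial : ℝ))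
  have hp : p = 0 := by
    apply Polynomial.eq_zero_of_infinite_isRoot
    apply Set.Infinite.mono _ (Set.Icc_infinite (zero_lt_one (α := ℝ)))
    intro t ht
    have := hz t ht
    rw [taylorP_extz] at this
    simp only [Set.mem_setOf_eq, Polynomial.IsRoot.def, p, Polynomial.eval_finset_sum,
      Polynomial.eval_monomial]
    rw [← this]
    refine Finset.sum_congr rfl fun j _ => by ring
  ext i
  have hi : p.coeff (i:ℕ) = 0 := by rw [hp]; simp
  simp only [p, Polynomial.finset_sum_coeff, Polynomial.coeff_monomial, Fin.val_inj] at hi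
  have : ((i:ℕ).factorial : ℝ) ≠ 0 := by positivity
  simpa [this] using hi

lemma coeff_bound (n : ℕ) : ∃ K : ℝ, 0 ≤ K ∧ ∀ v : Fin n → ℝ,
    ‖v‖ ≤ K * ∫ t in (0:ℝ)..1, |taylorP n (extz v) t| := by
  obtain ⟨K, _, hK⟩ := (momentMap n).exists_antilipschitzWith (momentMap_ker n)
  refine ⟨K, K.2, fun v => ?_⟩
  have h1 := hK.le_mul_dist v 0
  simp only [dist_zero_right, map_zero] at h1
  refine h1.trans ?_
  gcongr
  have hc := taylorP_continuous n (extz v)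
  rw [pi_norm_le_iff_of_nonneg
    (intervalIntegral.integral_nonneg zero_le_one fun t _ => abs_nonneg _)]
  intro i
  simp only [momentMap, LinearMap.coe_mk, AddHom.coe_mk]
  refine (intervalIntegral.norm_integral_le_integral_norm zero_le_one).trans ?_
  apply intervalIntegral.integral_mono_on zero_le_one
  · apply Continuous.intervalIntegrable; fun_prop
  · apply Continuous.intervalIntegrable; fun_prop
  · intro t ht
    rw [Real.norm_eq_abs, abs_mul]
    exact mul_le_of_le_one_right (abs_nonneg _) (basis_bound _ t ht.1 ht.2)

lemma err_bound (n : ℕ) (hn : 0 < n) (z f : ℝ → EuclideanSpace ℝ (Fin n))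
    (hz : ContinuousOn z (Set.Icc 0 1)) (hf : IntegrableOn f (Set.Icc 0 1))
    (hs : ∀ (i : Fin n), ∀ t ∈ Set.Icc (0:ℝ) 1,
        z t i = z 0 i + ∫ s in (0:ℝ)..t, (extz (z s) (i + 1) + f s i))
    (k : ℕ) : ∀ i, n ≤ i + k → ∀ t ∈ Set.Icc (0:ℝ) 1,
      |extz (z t) i - taylorP n (fun j => extz (z 0) (i + j)) t|
        ≤ k * ∫ t in Set.Icc (0:ℝ) 1, ‖f t‖ := by
  have hF : 0 ≤ ∫ t in Set.Icc (0:ℝ) 1, ‖f t‖ := by positivity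
  have hbig : ∀ i, n ≤ i → ∀ t, extz (z t) i - taylorP n (fun j => extz (z 0) (i + j)) t = 0 := by
    intro i hi t
    have h1 : ∀ j t, extz (z t) (i + j) = 0 := by
      intro j t
      unfold extz
      rw [dif_neg (by omega)]
    have := h1 0 t
    simp only [add_zero] at this
    simp [taylorP, h1, this]
  induction k with
  | zero => intro i hi t _; simp [hbig i hi t]
  | succ k ih =>
    intro i hi t ht
    rcases le_or_gt n i with hin | hin
    · rw [hbig i hin t, abs_zero]; positivity
    have hcz : ContinuousOn (fun s => extz (z s) (i+1)) (Set.Icc 0 1) := by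
      unfold extz
      by_cases h : i + 1 < n
      · simp only [h, dite_true]
        fun_prop
      · simp only [h, dite_false]; fun_prop
    have hsub : Set.uIcc 0 t ⊆ Set.Icc (0:ℝ) 1 := by
      rw [Set.uIcc_of_le ht.1]; exact Set.Icc_subset_Icc le_rfl ht.2
    have hfi : IntegrableOn (fun s => f s ⟨i, hin⟩) (Set.Icc 0 1) :=
      (EuclideanSpace.proj (𝕜 := ℝ) (⟨i, hin⟩ : Fin n)).integrable_comp hf
    have hfI : IntervalIntegrable (fun s => f s ⟨i, hin⟩) volume 0 t :=
      (hfi.mono_set hsub).intervalIntegrable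
    have hzI : IntervalIntegrable (fun s => extz (z s) (i+1)) volume 0 t :=
      (hcz.mono hsub).intervalIntegrable
    have hPc := taylorP_continuous n (fun j => extz (z 0) (i + 1 + j))
    have hPI : IntervalIntegrable (taylorP n (fun j => extz (z 0) (i + 1 + j))) volume 0 t :=
      hPc.intervalIntegrable _ _
    have e1 : extz (z t) i = z t ⟨i, hin⟩ := by simp [extz, hin]
    have e2 : extz (z 0) i = z 0 ⟨i, hin⟩ := by simp [extz, hin]
    have e3 := taylorP_integral n (fun j => extz (z 0) (i + j)) (by simp [extz]) hn t
    have e4 : (fun j => extz (z 0) (i + (j+1))) = (fun j => extz (z 0) (i + 1 + j)) := by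
      ext j; congr 1; ring
    simp only [add_zero] at e3
    rw [e4] at e3
    have key : extz (z t) i - taylorP n (fun j => extz (z 0) (i + j)) t
      = (∫ s in (0:ℝ)..t, (extz (z s) (i+1) - taylorP n (fun j => extz (z 0) (i + 1 + j)) s))
        + ∫ s in (0:ℝ)..t, f s ⟨i, hin⟩ := by
      rw [e3, e1, e2, hs ⟨i, hin⟩ t ht, intervalIntegral.integral_add hzI hfI,
        intervalIntegral.integral_sub hzI hPI]
      ring
    rw [key]
    refine (abs_add_le _ _).trans ?_
    push_cast
    rw [add_mul, one_mul]
    apply add_le_add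
    · have := intervalIntegral.norm_integral_le_of_norm_le_const (a := 0) (b := t)
        (f := fun s => extz (z s) (i+1) - taylorP n (fun j => extz (z 0) (i + 1 + j)) s)
        (C := k * ∫ t in Set.Icc (0:ℝ) 1, ‖f t‖) (by
          intro s hs'
          rw [Set.uIoc_of_le ht.1] at hs'
          exact ih (i+1) (by omega) s ⟨hs'.1.le, hs'.2.trans ht.2⟩)
      rw [Real.norm_eq_abs] at this
      refine this.trans ?_
      rw [sub_zero, abs_of_nonneg ht.1]
      exact mul_le_of_le_one_right (by positivity) ht.2
    · rw [← Real.norm_eq_abs]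
      refine (intervalIntegral.norm_integral_le_integral_norm ht.1).trans ?_
      rw [intervalIntegral.integral_of_le ht.1]
      have hst : Set.Ioc 0 t ⊆ Set.Icc (0:ℝ) 1 := fun s hs' => ⟨hs'.1.le, hs'.2.trans ht.2⟩
      calc _ ≤ ∫ s in Set.Icc (0:ℝ) 1, ‖f s ⟨i, hin⟩‖ :=
            setIntegral_mono_set hfi.norm (Filter.Eventually.of_forall fun _ => norm_nonneg _)
              hst.eventuallyLE
        _ ≤ _ := integral_mono hfi.norm hf.norm fun s => PiLp.norm_apply_le (f s) _

/-- **L¹ estimate for the canonical observable system with integrable perturbation.**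
For the canonical (Brunovsky) observable system `ż_i = z_{i+1} + f_i` (`i+1 < n`),
`ż_{n-1} = f_{n-1}` (0-indexed), with observation `y = z₀`, there is `c > 0`
depending only on `n` such that whenever `z` is absolutely continuous on `[0,1]`
and `f` is integrable on `[0,1]`, one has
`∫₀¹ ‖z‖ ≤ c (∫₀¹ |y| + ∫₀¹ ‖f‖)`. -/
theorem canonical_system_estimate_integrable_perturbation (n : ℕ) (hn : 0 < n) :
    ∃ c > 0, ∀ (z f : ℝ → EuclideanSpace ℝ (Fin n)),
      ContinuousOn z (Set.Icc 0 1) →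
      IntegrableOn f (Set.Icc 0 1) →
      (∀ (i : Fin n) (h : (i : ℕ) + 1 < n), ∀ t ∈ Set.Icc (0:ℝ) 1,
        z t i = z 0 i + ∫ s in (0:ℝ)..t, (z s ⟨(i : ℕ) + 1, h⟩ + f s i)) →
      (∀ i : Fin n, (i : ℕ) + 1 = n → ∀ t ∈ Set.Icc (0:ℝ) 1,
        z t i = z 0 i + ∫ s in (0:ℝ)..t, f s i) →
      (∫ t in Set.Icc (0:ℝ) 1, ‖z t‖) ≤
        c * ((∫ t in Set.Icc (0:ℝ) 1, |z t ⟨0, hn⟩|) +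
             ∫ t in Set.Icc (0:ℝ) 1, ‖f t‖) := by
  obtain ⟨K, hK0, hK⟩ := coeff_bound n
  refine ⟨n * (n * (K * (1 + n)) + n) + 1, by positivity, ?_⟩
  intro z f hz hf h1 h2
  have hs : ∀ (i : Fin n), ∀ t ∈ Set.Icc (0:ℝ) 1,
        z t i = z 0 i + ∫ s in (0:ℝ)..t, (extz (z s) (i + 1) + f s i) := by
    intro i t ht
    by_cases h : (i:ℕ) + 1 < n
    · rw [h1 i h t ht]; simp [extz, h]
    · rw [h2 i (by omega) t ht]; simp [extz, h]
  have herr := err_bound n hn z f hz hf hs n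
  set F := ∫ t in Set.Icc (0:ℝ) 1, ‖f t‖ with hFdef
  set Y := ∫ t in Set.Icc (0:ℝ) 1, |z t ⟨0, hn⟩| with hYdef
  have hF : 0 ≤ F := by positivity
  have hY : 0 ≤ Y := by positivity
  have hv : ‖(z 0 : Fin n → ℝ)‖ ≤ K * (Y + n * F) := by
    refine (hK (z 0)).trans ?_
    gcongr
    have hyc : ContinuousOn (fun t => |z t ⟨0, hn⟩|) (Set.Icc 0 1) := by fun_prop
    have hyI : IntervalIntegrable (fun t => |z t ⟨0, hn⟩|) volume 0 1 :=
      ContinuousOn.intervalIntegrable (by rwa [Set.uIcc_of_le zero_le_one])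
    have hPc := taylorP_continuous n (extz (z 0))
    calc ∫ t in (0:ℝ)..1, |taylorP n (extz (z 0)) t|
        ≤ ∫ t in (0:ℝ)..1, (|z t ⟨0, hn⟩| + n * F) := by
          apply intervalIntegral.integral_mono_on zero_le_one
          · apply Continuous.intervalIntegrable; fun_prop
          · exact hyI.add (by simp)
          · intro t ht
            have := herr 0 (by omega) t ht
            simp only [zero_add] at this
            have e : extz (z t) 0 = z t ⟨0, hn⟩ := by simp [extz, hn]
            rw [e] at this
            have e2 : taylorP n (fun j => extz (z 0) j) t = taylorP n (extz (z 0)) t := rfl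
            rw [e2, abs_sub_comm] at this
            have := abs_sub_abs_le_abs_sub (taylorP n (extz (z 0)) t) (z t ⟨0, hn⟩)
            linarith
      _ = Y + n * F := by
          rw [intervalIntegral.integral_add hyI (by simp), intervalIntegral.integral_of_le zero_le_one,
            ← integral_Icc_eq_integral_Ioc]
          simp [hYdef]
  set A := K * (Y + n * F) with hA
  have hA0 : 0 ≤ A := by positivity
  have ha : ∀ j, |extz (z 0) j| ≤ A := by
    intro j
    unfold extz
    split_ifs with h
    · exact (norm_le_pi_norm (z 0 : Fin n → ℝ) ⟨j, h⟩).trans hv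
    · simpa using hA0
  have hpt : ∀ t ∈ Set.Icc (0:ℝ) 1, ‖z t‖ ≤ n * (n * A + n * F) := by
    intro t ht
    have hsum : ‖z t‖ ≤ ∑ i, |z t i| := by
      rw [EuclideanSpace.norm_eq]
      apply Real.sqrt_le_iff.2
      refine ⟨by positivity, ?_⟩
      have := Finset.sum_sq_le_sq_sum_of_nonneg (s := Finset.univ) (f := fun i => |z t i|)
        (fun i _ => abs_nonneg _)
      simpa using this
    refine hsum.trans ?_
    calc _ ≤ ∑ i : Fin n, (n * A + n * F) := by
          refine Finset.sum_le_sum fun i _ => ?_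
          have h3 := herr i (by omega) t ht
          have h4 := taylorP_abs_le n (fun j => extz (z 0) (i + j)) A (fun j => ha _) t ht.1 ht.2
          have e : extz (z t) i = z t i := by simp [extz]
          rw [e] at h3
          have := abs_sub_abs_le_abs_sub (z t i) (taylorP n (fun j => extz (z 0) (i + j)) t)
          linarith
      _ = _ := by simp; ring
  have hfin := norm_setIntegral_le_of_norm_le_const (μ := volume) (s := Set.Icc (0:ℝ) 1)
    (f := fun t => ‖z t‖) (C := n * (n * A + n * F)) (by simp) (by simpa using hpt)
  have hfin2 : (∫ t in Set.Icc (0:ℝ) 1, ‖z t‖) ≤ n * (n * A + n * F) := by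
    refine (le_abs_self _).trans ?_
    simpa using hfin
  refine hfin2.trans ?_
  have hA' : A ≤ K * (1 + n) * (Y + F) := by
    rw [hA, mul_assoc]
    gcongr
    have : 0 ≤ (n:ℝ) * Y := by positivity
    linarith
  calc (n:ℝ) * (n * A + n * F) ≤ n * (n * (K * (1 + n) * (Y + F)) + n * (Y + F)) := by
        gcongr; linarith
    _ = n * (n * (K * (1 + n)) + n) * (Y + F) := by ring
    _ ≤ _ := by rw [add_mul _ 1]; linarith
end

section
/- Let A be an n×n real matrix and C an m×n real matrix such that the pair (A, C) is completely observable. Then there exists a constant c > 0, depending only on A and C, such that for every absolutely continuous z : [0,1] → ℝ^n with integrable f = ż − A z, and every φ ∈ W^{n,1}([0,1], ℝ^n), one has ∫₀¹ |z(t)| dt ≤ c ( ∫₀¹ |C z(t)| dt + ∫₀¹ |f(t) − φ(t)| dt + |φ|_n ), where |φ|_n = Σ_{j=0}^n ∫₀¹ |φ^{(j)}(t)| dt. -/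
open MeasureTheory

/-- The pair `(A, C)` is completely observable: the only vector `v` with
`C A^k v = 0` for all `k = 0, …, n-1` is `v = 0`. -/
def CompletelyObservable (n m : ℕ) (A : Matrix (Fin n) (Fin n) ℝ)
    (C : Matrix (Fin m) (Fin n) ℝ) : Prop :=
  ∀ v : Fin n → ℝ, (∀ k < n, (C * A ^ k).mulVec v = 0) → v = 0

section helpers
variable {E F : Type*} [NormedAddCommGroup E] [NormedSpace ℝ E] [FiniteDimensional ℝ E]
  [CompleteSpace E] [NormedAddCommGroup F] [NormedSpace ℝ F]

theorem aux_hasDeriv (L : E →L[ℝ] E) (v : E) (t : ℝ) :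
    HasDerivAt (fun s : ℝ => NormedSpace.exp (s • L) v) (L (NormedSpace.exp (t • L) v)) t := by
  have h := hasDerivAt_exp_smul_const' (𝕂 := ℝ) L t
  have h2 := ((ContinuousLinearMap.apply ℝ E v).hasFDerivAt).comp_hasDerivAt t h
  exact h2

theorem aux_exp_inj (L : E →L[ℝ] E) (v : E) (t : ℝ)
    (h : NormedSpace.exp (t • L) v = 0) : v = 0 := by
  let _ : NormedAlgebra ℚ (E →L[ℝ] E) := NormedAlgebra.restrictScalars ℚ ℝ _
  have hu : IsUnit (NormedSpace.exp (t • L)) := NormedSpace.isUnit_exp _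
  obtain ⟨u, hu⟩ := hu
  have h1 : (u⁻¹.val * u.val) v = 0 := by
    rw [mul_apply_eq_comp, hu, h, map_zero]
  simpa using h1

theorem aux_cont (L : E →L[ℝ] E) :
    Continuous (fun s : ℝ => NormedSpace.exp (s • L)) := by
  exact continuous_iff_continuousAt.2
    (fun t => (hasDerivAt_exp_smul_const' (𝕂 := ℝ) L t).continuousAt)

theorem aux_vanish (L : E →L[ℝ] E) (C : E →L[ℝ] F) (v : E)
    (h : ∀ t ∈ Set.Ioo (0:ℝ) 1, C (NormedSpace.exp (t • L) v) = 0) (k : ℕ) :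
    ∀ t ∈ Set.Ioo (0:ℝ) 1, C ((L ^ k) (NormedSpace.exp (t • L) v)) = 0 := by
  induction k with
  | zero => simpa using h
  | succ k ih =>
    intro t ht
    have h1 := ((C.comp (L ^ k)).hasFDerivAt).comp_hasDerivAt t (aux_hasDeriv L v t)
    have h2 : HasDerivAt (fun _ : ℝ => (0 : F)) (0 : F) t := hasDerivAt_const _ _
    have h3 : (⇑(C.comp (L ^ k)) ∘ fun s : ℝ => NormedSpace.exp (s • L) v)
        =ᶠ[nhds t] fun _ => (0 : F) := by
      filter_upwards [isOpen_Ioo.mem_nhds ht] with s hs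
      exact ih s hs
    have h4 := h1.unique (h2.congr_of_eventuallyEq h3)
    rw [pow_succ, mul_apply_eq_comp]
    exact h4

theorem aux_lower (L : E →L[ℝ] E) (C : E →L[ℝ] F)
    (hobs : ∀ v, (∀ k, C ((L ^ k) v) = 0) → v = 0) :
    ∃ δ > 0, ∀ v : E, δ * ‖v‖ ≤ ∫ t in (0:ℝ)..1, ‖C (NormedSpace.exp (t • L) v)‖ := by
  rcases subsingleton_or_nontrivial E with hE | hE
  · refine ⟨1, one_pos, fun v => ?_⟩
    rw [Subsingleton.elim v 0]; simp
  have hc2 : Continuous (fun p : E × ℝ => ‖C (NormedSpace.exp (p.2 • L) p.1)‖) := by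
    have := aux_cont L
    have h2 : Continuous (fun p : E × ℝ => NormedSpace.exp (p.2 • L)) := this.comp continuous_snd
    exact (C.continuous.comp (h2.clm_apply continuous_fst)).norm
  have hN : Continuous (fun v : E => ∫ t in (0:ℝ)..1, ‖C (NormedSpace.exp (t • L) v)‖) :=
    intervalIntegral.continuous_parametric_intervalIntegral_of_continuous' hc2 0 1
  obtain ⟨v0, hv0, hmin⟩ := (isCompact_sphere (0:E) 1).exists_isMinOn
    (NormedSpace.sphere_nonempty.2 zero_le_one) hN.continuousOn
  have hct : Continuous (fun t : ℝ => ‖C (NormedSpace.exp (t • L) v0)‖) :=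
    hc2.comp (Continuous.prodMk continuous_const continuous_id)
  refine ⟨∫ t in (0:ℝ)..1, ‖C (NormedSpace.exp (t • L) v0)‖, ?_, fun v => ?_⟩
  · by_contra hneg
    have hne : v0 ≠ 0 := by
      rintro rfl
      simp at hv0
    apply hne
    have hz : ∀ t ∈ Set.Ioo (0:ℝ) 1, C (NormedSpace.exp (t • L) v0) = 0 := by
      intro t ht
      by_contra hx
      exact hneg (intervalIntegral.integral_pos one_pos hct.continuousOn
        (fun _ _ => norm_nonneg _) ⟨t, ⟨ht.1.le, ht.2.le⟩, norm_pos_iff.2 hx⟩)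
    exact aux_exp_inj L v0 (1/2) (hobs _ (fun k => aux_vanish L C v0 hz k (1/2) (by norm_num)))
  · rcases eq_or_ne v 0 with rfl | hv
    · simp
    have hpos : 0 < ‖v‖ := norm_pos_iff.2 hv
    have h1 := hmin (a := ‖v‖⁻¹ • v) (by simp [norm_smul, hpos.ne'])
    have h2 : ∀ t : ℝ, ‖C (NormedSpace.exp (t • L) (‖v‖⁻¹ • v))‖ =
        ‖v‖⁻¹ * ‖C (NormedSpace.exp (t • L) v)‖ := by
      intro t
      rw [ContinuousLinearMap.map_smul, ContinuousLinearMap.map_smul, norm_smul, norm_inv,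
        norm_norm]
    simp only [Set.mem_ofPred_eq, h2, intervalIntegral.integral_const_mul] at h1
    rw [← div_eq_inv_mul, le_div_iff₀ hpos] at h1
    exact h1

theorem aux_gron (L : E →L[ℝ] E) (z f : ℝ → E)
    (hz : ContinuousOn z (Set.Icc 0 1)) (hf : IntegrableOn f (Set.Icc 0 1))
    (hzf : ∀ t ∈ Set.Icc (0:ℝ) 1, z t = z 0 + ∫ s in (0:ℝ)..t, (L (z s) + f s)) :
    (∫ t in (0:ℝ)..1, ‖z t - NormedSpace.exp (t • L) (z 0)‖) ≤
      gronwallBound 0 ‖L‖ (∫ t in Set.Icc (0:ℝ) 1, ‖f t‖) 1 := by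
  set y : ℝ → E := fun t => NormedSpace.exp (t • L) (z 0) with hy
  have hyc : Continuous y := (aux_cont L).clm_apply continuous_const
  have hdc : ContinuousOn (fun t => z t - y t) (Set.Icc 0 1) := hz.sub hyc.continuousOn
  have hsub : ∀ t ∈ Set.Icc (0:ℝ) 1, Set.uIcc 0 t ⊆ Set.Icc (0:ℝ) 1 := by
    intro t ht
    rw [Set.uIcc_of_le ht.1]
    exact Set.Icc_subset_Icc_right ht.2
  have hdi : ∀ t ∈ Set.Icc (0:ℝ) 1,
      IntervalIntegrable (fun t => ‖z t - y t‖) volume 0 t := fun t ht =>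
    (hdc.norm.mono (hsub t ht)).intervalIntegrable
  have hfi : ∀ t ∈ Set.Icc (0:ℝ) 1, IntervalIntegrable f volume 0 t := fun t ht =>
    (hf.mono_set (hsub t ht)).intervalIntegrable
  have hyint : ∀ t, y t = z 0 + ∫ s in (0:ℝ)..t, L (y s) := by
    intro t
    rw [intervalIntegral.integral_eq_sub_of_hasDerivAt (f := y)
      (fun s _ => aux_hasDeriv L (z 0) s)
      ((L.continuous.comp hyc).intervalIntegrable _ _)]
    simp [hy]
  have key : ∀ t ∈ Set.Icc (0:ℝ) 1, ‖z t - y t‖ ≤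
      ‖L‖ * (∫ s in (0:ℝ)..t, ‖z s - y s‖) + ∫ t in Set.Icc (0:ℝ) 1, ‖f t‖ := by
    intro t ht
    have hLz : IntervalIntegrable (fun s => L (z s)) volume 0 t :=
      (L.continuous.comp_continuousOn (hz.mono (hsub t ht))).intervalIntegrable
    have hLy : IntervalIntegrable (fun s => L (y s)) volume 0 t :=
      (L.continuous.comp hyc).intervalIntegrable _ _
    have e : z t - y t = (∫ s in (0:ℝ)..t, L (z s - y s)) + ∫ s in (0:ℝ)..t, f s := by
      rw [hzf t ht, hyint t, intervalIntegral.integral_add hLz (hfi t ht)]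
      simp only [map_sub]
      rw [intervalIntegral.integral_sub hLz hLy]
      abel
    rw [e]
    refine (norm_add_le _ _).trans (add_le_add ?_ ?_)
    · rw [← intervalIntegral.integral_const_mul]
      refine intervalIntegral.norm_integral_le_of_norm_le ht.1 ?_ ((hdi t ht).const_mul _)
      exact Filter.Eventually.of_forall (fun s _ => L.le_opNorm _)
    · refine (intervalIntegral.norm_integral_le_integral_norm ht.1).trans ?_
      rw [intervalIntegral.integral_of_le ht.1]
      refine setIntegral_mono_set hf.norm ?_ ?_
      · exact Filter.Eventually.of_forall (fun s => norm_nonneg _)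
      · exact (Set.Ioc_subset_Icc_self.trans (Set.Icc_subset_Icc_right ht.2)).eventuallyLE
  have h1 : (1:ℝ) ∈ Set.Icc (0:ℝ) 1 := by simp
  have hI : IntegrableOn (fun t => ‖z t - y t‖) (Set.Icc 0 1) := hdc.norm.integrableOn_Icc
  have hg := norm_le_gronwallBound_of_norm_deriv_right_le
    (f := fun t => ∫ s in (0:ℝ)..t, ‖z s - y s‖) (f' := fun t => ‖z t - y t‖)
    (δ := 0) (K := ‖L‖) (ε := ∫ t in Set.Icc (0:ℝ) 1, ‖f t‖) (a := 0) (b := 1)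
    ?_ ?_ (by simp) ?_ 1 h1
  · rw [sub_zero] at hg
    exact (le_abs_self _).trans hg
  · have := intervalIntegral.continuousOn_primitive_interval
      (f := fun t => ‖z t - y t‖) (μ := volume) (a := 0) (b := 1)
      (by rwa [Set.uIcc_of_le zero_le_one])
    rwa [Set.uIcc_of_le zero_le_one] at this
  · intro t ht
    have ht' : t ∈ Set.Icc (0:ℝ) 1 := ⟨ht.1, ht.2.le⟩
    have hmem : Set.Icc (0:ℝ) 1 ∈ nhdsWithin t (Set.Ioi t) :=
      Filter.mem_of_superset (Ioc_mem_nhdsGT ht.2)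
        (fun s hs => ⟨ht.1.trans hs.1.le, hs.2⟩)
    have hcw : ContinuousWithinAt (fun t => ‖z t - y t‖) (Set.Ioi t) t :=
      (hdc.norm t ht').mono_of_mem_nhdsWithin hmem
    exact intervalIntegral.integral_hasDerivWithinAt_right (hdi t ht') 
      ⟨Set.Icc 0 1, hmem, hI.aestronglyMeasurable⟩ hcw
  · intro t ht
    have ht' : t ∈ Set.Icc (0:ℝ) 1 := ⟨ht.1, ht.2.le⟩
    have h0 : 0 ≤ ∫ s in (0:ℝ)..t, ‖z s - y s‖ :=
      intervalIntegral.integral_nonneg ht.1 (fun _ _ => norm_nonneg _)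
    rw [norm_norm, Real.norm_of_nonneg h0]
    exact key t ht'

theorem aux_main (L : E →L[ℝ] E) (C : E →L[ℝ] F)
    (hobs : ∀ v, (∀ k, C ((L ^ k) v) = 0) → v = 0) :
    ∃ c > 0, ∀ z f : ℝ → E, ContinuousOn z (Set.Icc 0 1) → IntegrableOn f (Set.Icc 0 1) →
    (∀ t ∈ Set.Icc (0:ℝ) 1, z t = z 0 + ∫ s in (0:ℝ)..t, (L (z s) + f s)) →
    (∫ t in Set.Icc (0:ℝ) 1, ‖z t‖) ≤
      c * ((∫ t in Set.Icc (0:ℝ) 1, ‖C (z t)‖) + ∫ t in Set.Icc (0:ℝ) 1, ‖f t‖) := by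
  obtain ⟨δ, hδ, hlow⟩ := aux_lower L C hobs
  obtain ⟨M, hM⟩ := isCompact_Icc.exists_bound_of_continuousOn
    (aux_cont L).continuousOn (s := Set.Icc (0:ℝ) 1)
  have hM0 : 0 ≤ M := (norm_nonneg _).trans (hM 0 (by simp))
  obtain ⟨G, hG0, hG⟩ : ∃ G ≥ 0, ∀ x, gronwallBound 0 ‖L‖ x 1 = G * x := by
    by_cases h : ‖L‖ = 0
    · refine ⟨1, zero_le_one, fun x => ?_⟩
      rw [h, gronwallBound_K0]; ring
    · refine ⟨(Real.exp ‖L‖ - 1) / ‖L‖, ?_, fun x => ?_⟩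
      · have : 0 ≤ Real.exp ‖L‖ - 1 := by
          have := Real.one_le_exp (norm_nonneg L)
          linarith
        positivity
      · rw [gronwallBound_of_K_ne_0 h]; simp; ring
  refine ⟨1 + M / δ + M / δ * (‖C‖ * G) + G, by positivity, fun z f hz hf hzf => ?_⟩
  have hgr := aux_gron L z f hz hf hzf
  rw [hG] at hgr
  set I := ∫ t in Set.Icc (0:ℝ) 1, ‖f t‖
  have hl := hlow (z 0)
  have hconv : ∀ g : ℝ → ℝ, (∫ t in Set.Icc (0:ℝ) 1, g t) = ∫ t in (0:ℝ)..1, g t := by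
    intro g
    rw [integral_Icc_eq_integral_Ioc, intervalIntegral.integral_of_le zero_le_one]
  rw [hconv (fun t => ‖z t‖), hconv (fun t => ‖C (z t)‖)]
  set J := ∫ t in (0:ℝ)..1, ‖C (z t)‖
  set D := ∫ t in (0:ℝ)..1, ‖z t - NormedSpace.exp (t • L) (z 0)‖
  have hI0 : 0 ≤ I := integral_nonneg (fun _ => norm_nonneg _)
  have hJ0 : 0 ≤ J := intervalIntegral.integral_nonneg zero_le_one (fun _ _ => norm_nonneg _)
  have hyc : Continuous (fun t : ℝ => NormedSpace.exp (t • L) (z 0)) :=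
    (aux_cont L).clm_apply continuous_const
  have hu : Set.uIcc (0:ℝ) 1 = Set.Icc 0 1 := Set.uIcc_of_le zero_le_one
  have hzi : IntervalIntegrable (fun t => ‖z t‖) volume 0 1 :=
    ContinuousOn.intervalIntegrable (by rw [hu]; exact hz.norm)
  have hCzi : IntervalIntegrable (fun t => ‖C (z t)‖) volume 0 1 :=
    ContinuousOn.intervalIntegrable
      (by rw [hu]; exact (C.continuous.comp_continuousOn hz).norm)
  have hdi : IntervalIntegrable (fun t => ‖z t - NormedSpace.exp (t • L) (z 0)‖) volume 0 1 :=
    ContinuousOn.intervalIntegrable (by rw [hu]; exact (hz.sub hyc.continuousOn).norm)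
  have s1 : δ * ‖z 0‖ ≤ J + ‖C‖ * D := by
    refine hl.trans ?_
    rw [← intervalIntegral.integral_const_mul, ← intervalIntegral.integral_add hCzi
      (hdi.const_mul _)]
    refine intervalIntegral.integral_mono_on zero_le_one
      ((C.continuous.comp hyc).norm.intervalIntegrable _ _) (hCzi.add (hdi.const_mul _)) ?_
    intro t _
    have e : C (NormedSpace.exp (t • L) (z 0)) =
        C (z t) - C (z t - NormedSpace.exp (t • L) (z 0)) := by simp
    rw [e]
    exact (norm_sub_le _ _).trans (add_le_add le_rfl (C.le_opNorm _))
  have s2 : (∫ t in (0:ℝ)..1, ‖z t‖) ≤ M * ‖z 0‖ + D := by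
    have e : M * ‖z 0‖ = ∫ t in (0:ℝ)..1, M * ‖z 0‖ := by simp
    rw [e, ← intervalIntegral.integral_add (by simp) hdi]
    refine intervalIntegral.integral_mono_on zero_le_one hzi
      (IntervalIntegrable.add (by simp) hdi) ?_
    intro t ht
    have e : z t = NormedSpace.exp (t • L) (z 0) + (z t - NormedSpace.exp (t • L) (z 0)) := by
      simp
    calc ‖z t‖ ≤ ‖NormedSpace.exp (t • L) (z 0)‖ + ‖z t - NormedSpace.exp (t • L) (z 0)‖ := by
          conv_lhs => rw [e]
          exact norm_add_le _ _
      _ ≤ _ := by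
          gcongr
          exact ContinuousLinearMap.le_of_opNorm_le _ (hM t ht) _
  have s3 : ‖z 0‖ ≤ (J + ‖C‖ * (G * I)) / δ := by
    rw [le_div_iff₀ hδ, mul_comm]
    refine s1.trans ?_
    gcongr
  calc _ ≤ M * ‖z 0‖ + D := s2
    _ ≤ M * ((J + ‖C‖ * (G * I)) / δ) + G * I := by gcongr
    _ = M / δ * J + (M / δ * (‖C‖ * G) + G) * I := by ring
    _ ≤ (1 + M / δ + M / δ * (‖C‖ * G) + G) * J
        + (1 + M / δ + M / δ * (‖C‖ * G) + G) * I := by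
        have a1 : 0 ≤ M / δ := by positivity
        have a2 : 0 ≤ M / δ * (‖C‖ * G) := by positivity
        gcongr
        · linarith
        · linarith
    _ = _ := by ring

end helpers

/-- **Estimate via smoothed perturbation.**
If `(A, C)` is completely observable, there is `c > 0` such that for every
absolutely continuous `z : [0,1] → ℝⁿ` with integrable `f = ż − A z`, and every
`φ ∈ W^{n,1}([0,1], ℝⁿ)` — encoded by the chain `Φ` of its derivatives with
`Φ 0 = φ` — one has
`∫₀¹ ‖z‖ ≤ c (∫₀¹ ‖C z‖ + ∫₀¹ ‖f − φ‖ + |φ|ₙ)` with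
`|φ|ₙ = Σ_{j=0}^{n} ∫₀¹ ‖φ^{(j)}‖`. -/
theorem observability_estimate_via_smoothing
    (n m : ℕ) (A : Matrix (Fin n) (Fin n) ℝ) (C : Matrix (Fin m) (Fin n) ℝ)
    (hobs : CompletelyObservable n m A C) :
    ∃ c > 0, ∀ (z f : ℝ → EuclideanSpace ℝ (Fin n))
        (Φ : ℕ → ℝ → EuclideanSpace ℝ (Fin n)),
      ContinuousOn z (Set.Icc 0 1) →
      IntegrableOn f (Set.Icc 0 1) →
      (∀ t ∈ Set.Icc (0:ℝ) 1,
        z t = z 0 + ∫ s in (0:ℝ)..t, (Matrix.toEuclideanLin A (z s) + f s)) →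
      (∀ j < n, ContinuousOn (Φ j) (Set.Icc 0 1)) →
      (∀ j ≤ n, IntegrableOn (Φ j) (Set.Icc 0 1)) →
      (∀ j < n, ∀ t ∈ Set.Icc (0:ℝ) 1, Φ j t = Φ j 0 + ∫ s in (0:ℝ)..t, Φ (j + 1) s) →
      (∫ t in Set.Icc (0:ℝ) 1, ‖z t‖) ≤
        c * ((∫ t in Set.Icc (0:ℝ) 1, ‖Matrix.toEuclideanLin C (z t)‖) +
             (∫ t in Set.Icc (0:ℝ) 1, ‖f t - Φ 0 t‖) +
             ∑ j ∈ Finset.range (n + 1), ∫ t in Set.Icc (0:ℝ) 1, ‖Φ j t‖) := by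
  have hpow : ∀ (k : ℕ) (v : EuclideanSpace ℝ (Fin n)),
      (((Matrix.toEuclideanLin A).toContinuousLinearMap ^ k) v).ofLp
        = (A ^ k).mulVec v.ofLp := by
    intro k
    induction k with
    | zero => intro v; simp
    | succ k ih =>
      intro v
      rw [pow_succ, mul_apply_eq_comp, ih, pow_succ, ← Matrix.mulVec_mulVec]
      rfl
  obtain ⟨c, hc, h⟩ := aux_main (Matrix.toEuclideanLin A).toContinuousLinearMap
    (Matrix.toEuclideanLin C).toContinuousLinearMap (by
      intro v hv
      have h0 : v.ofLp = 0 := by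
        refine hobs _ (fun k _ => ?_)
        have h1 := congrArg WithLp.ofLp (hv k)
        rw [← Matrix.mulVec_mulVec, ← hpow]
        exact h1
      ext i
      simpa using congrFun h0 i)
  refine ⟨c, hc, fun z f Φ hz hf hzf _ hΦi _ => ?_⟩
  refine (h z f hz hf hzf).trans ?_
  have hi0 := hΦi 0 (Nat.zero_le _)
  have e1 : (∫ t in Set.Icc (0:ℝ) 1, ‖f t‖) ≤
      (∫ t in Set.Icc (0:ℝ) 1, ‖f t - Φ 0 t‖) + ∫ t in Set.Icc (0:ℝ) 1, ‖Φ 0 t‖ := by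
    have hs : IntegrableOn (fun t => f t - Φ 0 t) (Set.Icc 0 1) := hf.sub hi0
    rw [← integral_add hs.norm hi0.norm]
    refine integral_mono hf.norm (hs.norm.add hi0.norm) (fun t => ?_)
    have := norm_add_le (f t - Φ 0 t) (Φ 0 t)
    simpa using this
  have e2 : (∫ t in Set.Icc (0:ℝ) 1, ‖Φ 0 t‖) ≤
      ∑ j ∈ Finset.range (n + 1), ∫ t in Set.Icc (0:ℝ) 1, ‖Φ j t‖ :=
    Finset.single_le_sum (f := fun j => ∫ t in Set.Icc (0:ℝ) 1, ‖Φ j t‖)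
      (fun j _ => integral_nonneg (fun _ => norm_nonneg _)) (by simp)
  refine mul_le_mul_of_nonneg_left ?_ hc.le
  rw [add_assoc]
  exact add_le_add le_rfl (e1.trans (add_le_add le_rfl e2))
end
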